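/- For any finite abelian group G, K_1(G) ≤ 2·k(G). -/

import Mathlib

open Finset

/-- `S(I)` is minimal zero-sum: nonempty, zero-sum, and no proper nonempty
subfamily is zero-sum. -/
def IsMinZeroSum {G : Type*} [AddCommGroup G] {ℓ : ℕ} (g : Fin ℓ → G)
    (I : Finset (Fin ℓ)) : Prop :=
  I.Nonempty ∧ ∑ i ∈ I, g i = 0 ∧ ∀ J ⊂ I, J.Nonempty → ∑ i ∈ J, g i ≠ 0

/-- `P` is an irreducible factorization of the indexed multiset `g`: a partition
of the index set all of whose parts are minimal zero-sum. -/
def IsFactorization {G : Type*} [AddCommGroup G] {ℓ : ℕ} (g : Fin ℓ → G)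
    (P : Finpartition (Finset.univ : Finset (Fin ℓ))) : Prop :=
  ∀ I ∈ P.parts, IsMinZeroSum g I

/-- `g` is a unique factorization indexed multiset (UFIM) over `G∖{0}`:
all elements are nonzero and there is exactly one irreducible factorization. -/
def IsUFIM {G : Type*} [AddCommGroup G] {ℓ : ℕ} (g : Fin ℓ → G) : Prop :=
  (∀ i, g i ≠ 0) ∧
  ∃! P : Finpartition (Finset.univ : Finset (Fin ℓ)), IsFactorization g P

/-- The cross number `k(S) = ∑ 1/ord(g_i)`. -/
noncomputable def crossNum {G : Type*} [AddCommGroup G] {ℓ : ℕ} (g : Fin ℓ → G) : ℝ :=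
  ∑ i, (1 : ℝ) / (addOrderOf (g i) : ℝ)

/-- `K₁(G)`: the maximal cross number of a UFIM over `G∖{0}`. -/
noncomputable def K1 (G : Type*) [AddCommGroup G] : ℝ :=
  sSup {x : ℝ | ∃ (ℓ : ℕ) (g : Fin ℓ → G), IsUFIM g ∧ crossNum g = x}

/-- `N₁(G)`: the maximal length of a UFIM over `G∖{0}`. -/
noncomputable def N1 (G : Type*) [AddCommGroup G] : ℕ :=
  sSup {n : ℕ | ∃ g : Fin n → G, IsUFIM g}

/-- `K(G)`: the maximal cross number of a minimal zero-sum indexed multiset over `G∖{0}`. -/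
noncomputable def Kcross (G : Type*) [AddCommGroup G] : ℝ :=
  sSup {x : ℝ | ∃ (ℓ : ℕ) (g : Fin ℓ → G), (∀ i, g i ≠ 0) ∧
    IsMinZeroSum g Finset.univ ∧ crossNum g = x}

/-- `g` is zero-sum free: no nonempty subfamily is zero-sum. -/
def IsZeroSumFree {G : Type*} [AddCommGroup G] {ℓ : ℕ} (g : Fin ℓ → G) : Prop :=
  ∀ I : Finset (Fin ℓ), I.Nonempty → ∑ i ∈ I, g i ≠ 0

/-- The little cross number `k(G)`: the maximal cross number of a zero-sum free
indexed multiset over `G∖{0}`. -/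
noncomputable def littleCross (G : Type*) [AddCommGroup G] : ℝ :=
  sSup {x : ℝ | ∃ (ℓ : ℕ) (g : Fin ℓ → G), (∀ i, g i ≠ 0) ∧
    IsZeroSumFree g ∧ crossNum g = x}

/-!
In a UFIM the only minimal zero-sum subfamilies are the parts of its factorization: the complement
of a minimal zero-sum subfamily `J` is zero-sum, hence factors, and adjoining `J` gives a
factorization of the whole family, which uniqueness identifies with the given one. So a subfamily
containing no part is zero-sum free. As the elements are nonzero, every part has at least two
indices; choosing one index from each part therefore splits the family into two zero-sum free
subfamilies, each of cross number at most `k(G)`.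
-/

theorem exists_subset_forall_parts_not_subset_not_disjoint {α : Type*} [DecidableEq α]
    {s : Finset α} (P : Finpartition s) (hP : ∀ I ∈ P.parts, I.Nontrivial) :
    ∃ T ⊆ s, ∀ I ∈ P.parts, ¬ I ⊆ T ∧ ¬ Disjoint I T := by
  obtain ⟨T, hTs, hT⟩ := P.exists_subset_part_bijOn
  refine ⟨T, hTs, fun I hI => ⟨fun hIT => ?_, fun hdisj => ?_⟩⟩
  · obtain ⟨x, hx, y, hy, hxy⟩ := hP I hI
    exact hxy <| hT.injOn (hIT hx) (hIT hy) <|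
      (P.part_eq_of_mem hI hx).trans (P.part_eq_of_mem hI hy).symm
  · obtain ⟨x, hxT, hxI⟩ := hT.surjOn hI
    exact disjoint_left.1 hdisj ((P.part_eq_iff_mem hI).1 hxI) hxT

section Factorization

variable {G : Type*} [AddCommGroup G] {ℓ : ℕ} {g : Fin ℓ → G} {A I J : Finset (Fin ℓ)}

theorem isMinZeroSum_iff_minimal :
    IsMinZeroSum g I ↔ Minimal (fun J => J.Nonempty ∧ ∑ i ∈ J, g i = 0) I := by
  simp only [IsMinZeroSum, minimal_iff_forall_lt, not_and, and_assoc, ne_eq]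

theorem exists_isMinZeroSum_subset (hA : A.Nonempty) (hA0 : ∑ i ∈ A, g i = 0) :
    ∃ J ⊆ A, IsMinZeroSum g J := by
  simpa only [isMinZeroSum_iff_minimal] using
    exists_minimal_le_of_wellFoundedLT (fun J => J.Nonempty ∧ ∑ i ∈ J, g i = 0) A ⟨hA, hA0⟩

theorem IsMinZeroSum.nontrivial (hI : IsMinZeroSum g I) (hg : ∀ i ∈ I, g i ≠ 0) :
    I.Nontrivial := by
  obtain ⟨⟨i, hi⟩, hI0, -⟩ := hI
  by_contra hnt
  obtain rfl : I = {i} :=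
    eq_singleton_iff_unique_mem.2 ⟨hi, fun j hj => Set.not_nontrivial_iff.1 hnt hj hi⟩
  exact hg i hi (by simpa only [sum_singleton] using hI0)

theorem IsMinZeroSum.sum_sdiff_eq_zero (hJ : IsMinZeroSum g J) (hJA : J ⊆ A)
    (hA0 : ∑ i ∈ A, g i = 0) : ∑ i ∈ A \ J, g i = 0 := by
  rw [sum_sdiff_eq_sub hJA, hA0, hJ.2.1, sub_zero]

theorem IsMinZeroSum.exists_finpartition_extend (hJ : IsMinZeroSum g J) (hJA : J ⊆ A)
    {P : Finpartition (A \ J)} (hP : ∀ I ∈ P.parts, IsMinZeroSum g I) :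
    ∃ Q : Finpartition A, J ∈ Q.parts ∧ ∀ I ∈ Q.parts, IsMinZeroSum g I :=
  ⟨P.extend hJ.1.ne_empty sdiff_disjoint (sdiff_union_of_subset hJA),
    mem_insert_self _ _, (forall_mem_insert _ _ _).2 ⟨hJ, hP⟩⟩

theorem exists_finpartition_isMinZeroSum (hA0 : ∑ i ∈ A, g i = 0) :
    ∃ P : Finpartition A, ∀ I ∈ P.parts, IsMinZeroSum g I := by
  induction A using Finset.strongInduction with
  | H A ih =>
    obtain rfl | hA := A.eq_empty_or_nonempty
    · exact ⟨Finpartition.empty _, fun I hI => absurd hI (notMem_empty I)⟩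
    · obtain ⟨J, hJA, hJ⟩ := exists_isMinZeroSum_subset hA hA0
      obtain ⟨P, hP⟩ := ih (A \ J) (sdiff_ssubset hJA hJ.1) (hJ.sum_sdiff_eq_zero hJA hA0)
      obtain ⟨Q, -, hQ⟩ := hJ.exists_finpartition_extend hJA hP
      exact ⟨Q, hQ⟩

theorem IsMinZeroSum.exists_isFactorization_mem_parts (hJ : IsMinZeroSum g J)
    (hg : ∑ i, g i = 0) : ∃ Q, IsFactorization g Q ∧ J ∈ Q.parts := by
  obtain ⟨P, hP⟩ :=
    exists_finpartition_isMinZeroSum (hJ.sum_sdiff_eq_zero (subset_univ J) hg)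
  obtain ⟨Q, hJQ, hQ⟩ := hJ.exists_finpartition_extend (subset_univ J) hP
  exact ⟨Q, hQ, hJQ⟩

theorem IsFactorization.sum_eq_zero {P : Finpartition (univ : Finset (Fin ℓ))}
    (hP : IsFactorization g P) : ∑ i, g i = 0 := by
  rw [← P.biUnion_parts, sum_biUnion P.disjoint]
  exact Finset.sum_eq_zero fun I hI => (hP I hI).2.1

theorem IsUFIM.mem_parts_of_isMinZeroSum (hg : IsUFIM g)
    {P : Finpartition (univ : Finset (Fin ℓ))} (hP : IsFactorization g P)
    (hJ : IsMinZeroSum g J) : J ∈ P.parts := by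
  obtain ⟨Q, hQ, hJQ⟩ := hJ.exists_isFactorization_mem_parts hP.sum_eq_zero
  rwa [hg.2.unique hP hQ]

end Factorization

/-- The subfamily of `g` indexed by `T` is zero-sum free. Unlike `IsZeroSumFree`, this keeps the
index set of the ambient family, so that a family can be split without reindexing. -/
def ZeroSumFreeOn {ι M : Type*} [AddCommMonoid M] (g : ι → M) (T : Finset ι) : Prop :=
  ∀ J ⊆ T, J.Nonempty → ∑ i ∈ J, g i ≠ 0

theorem ZeroSumFreeOn.ne_zero {ι M : Type*} [AddCommMonoid M] {g : ι → M} {T : Finset ι}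
    (hT : ZeroSumFreeOn g T) {i : ι} (hi : i ∈ T) : g i ≠ 0 := by
  simpa only [sum_singleton] using
    hT {i} (singleton_subset_iff.2 hi) (singleton_nonempty i)

theorem ZeroSumFreeOn.isZeroSumFree_comp {ι G : Type*} [AddCommGroup G] {g : ι → G}
    {T : Finset ι} (hT : ZeroSumFreeOn g T) {n : ℕ} (f : Fin n ↪ ι) (hf : ∀ k, f k ∈ T) :
    IsZeroSumFree (g ∘ f) := by
  intro I hI
  have hIT : I.map f ⊆ T := forall_mem_map.2 fun k _ => hf k
  simpa only [sum_map, Function.comp_apply] using hT (I.map f) hIT (hI.map)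

section UFIM

variable {G : Type*} [AddCommGroup G] {ℓ : ℕ} {g : Fin ℓ → G}

theorem IsUFIM.zeroSumFreeOn (hg : IsUFIM g) {P : Finpartition (univ : Finset (Fin ℓ))}
    (hP : IsFactorization g P) {T : Finset (Fin ℓ)} (hT : ∀ I ∈ P.parts, ¬ I ⊆ T) :
    ZeroSumFreeOn g T := by
  intro J hJT hJ hJ0
  obtain ⟨K, hKJ, hK⟩ := exists_isMinZeroSum_subset hJ hJ0
  exact hT K (hg.mem_parts_of_isMinZeroSum hP hK) (hKJ.trans hJT)

theorem IsUFIM.exists_zeroSumFreeOn_compl (hg : IsUFIM g) :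
    ∃ T, ZeroSumFreeOn g T ∧ ZeroSumFreeOn g Tᶜ := by
  obtain ⟨P, hP, -⟩ := hg.2
  obtain ⟨T, -, hT⟩ := exists_subset_forall_parts_not_subset_not_disjoint P
    fun I hI => (hP I hI).nontrivial fun i _ => hg.1 i
  exact ⟨T, hg.zeroSumFreeOn hP fun I hI => (hT I hI).1,
    hg.zeroSumFreeOn hP fun I hI hIT => (hT I hI).2 (subset_compl_iff_disjoint_right.1 hIT)⟩

end UFIM

section CrossNumber

/-- The cross numbers of the zero-sum free indexed multisets over `G∖{0}`, with supremum
`littleCross G`. When this set is unbounded, `littleCross G` is the junk value `sSup = 0`.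
An element of infinite order contributes `1 / 0 = 0`. -/
def zeroSumFreeCrossNums (G : Type*) [AddCommGroup G] : Set ℝ :=
  {x : ℝ | ∃ (ℓ : ℕ) (g : Fin ℓ → G), (∀ i, g i ≠ 0) ∧ IsZeroSumFree g ∧ crossNum g = x}

variable {G : Type*} [AddCommGroup G] {ℓ : ℕ} {g : Fin ℓ → G}

theorem crossNum_nonneg (g : Fin ℓ → G) : 0 ≤ crossNum g :=
  sum_nonneg fun _ _ => by positivity

theorem crossNum_le_length (g : Fin ℓ → G) : crossNum g ≤ ℓ := by
  calc crossNum g ≤ ∑ _i : Fin ℓ, (1 : ℝ) :=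
        sum_le_sum fun i _ => (one_div (addOrderOf (g i) : ℝ)).trans_le (Nat.cast_inv_le_one _)
    _ = ℓ := by simp

theorem littleCross_nonneg : 0 ≤ littleCross G := by
  refine Real.sSup_nonneg ?_
  rintro _ ⟨ℓ, g, -, -, rfl⟩
  exact crossNum_nonneg g

theorem IsZeroSumFree.injective_sum_Iio (hg : IsZeroSumFree g) :
    Function.Injective fun k : Fin ℓ => ∑ i ∈ Iio k, g i := by
  refine Function.Injective.of_lt_imp_ne fun a b hab heq => ?_
  have hsub : Iio a ⊆ Iio b := Iio_subset_Iio hab.le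
  refine hg (Iio b \ Iio a) ⟨a, by simpa using hab⟩ ?_
  rw [sum_sdiff_eq_sub hsub, sub_eq_zero]
  exact heq.symm

theorem IsZeroSumFree.length_le_card [Finite G] (hg : IsZeroSumFree g) : ℓ ≤ Nat.card G := by
  simpa only [Nat.card_fin] using Nat.card_le_card_of_injective _ hg.injective_sum_Iio

theorem bddAbove_zeroSumFreeCrossNums [Finite G] : BddAbove (zeroSumFreeCrossNums G) := by
  refine ⟨Nat.card G, ?_⟩
  rintro _ ⟨ℓ, g, -, hg, rfl⟩
  exact (crossNum_le_length g).trans (Nat.cast_le.2 hg.length_le_card)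

theorem ZeroSumFreeOn.sum_le_littleCross (hG : BddAbove (zeroSumFreeCrossNums G)) {ι : Type*}
    {g : ι → G} {T : Finset ι} (hT : ZeroSumFreeOn g T) :
    ∑ i ∈ T, (1 : ℝ) / (addOrderOf (g i) : ℝ) ≤ littleCross G := by
  let f : Fin #T ↪ ι := T.equivFin.symm.toEmbedding.trans (Function.Embedding.subtype _)
  have hf (k : Fin #T) : f k ∈ T := (T.equivFin.symm k).2
  have hcross : crossNum (g ∘ f) = ∑ i ∈ T, (1 : ℝ) / (addOrderOf (g i) : ℝ) :=
    (T.equivFin.symm.sum_comp fun i : T => (1 : ℝ) / (addOrderOf (g i) : ℝ)).trans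
      (sum_coe_sort T fun i => (1 : ℝ) / (addOrderOf (g i) : ℝ))
  exact le_csSup hG ⟨#T, g ∘ f, fun k => hT.ne_zero (hf k), hT.isZeroSumFree_comp f hf, hcross⟩

theorem IsUFIM.crossNum_le_two_littleCross (hG : BddAbove (zeroSumFreeCrossNums G))
    (hg : IsUFIM g) : crossNum g ≤ 2 * littleCross G := by
  obtain ⟨T, hT, hTc⟩ := hg.exists_zeroSumFreeOn_compl
  calc crossNum g
      = ∑ i ∈ T, (1 : ℝ) / (addOrderOf (g i) : ℝ) + ∑ i ∈ Tᶜ, (1 : ℝ) / (addOrderOf (g i) : ℝ) :=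
        (sum_add_sum_compl T _).symm
    _ ≤ littleCross G + littleCross G :=
        add_le_add (hT.sum_le_littleCross hG) (hTc.sum_le_littleCross hG)
    _ = 2 * littleCross G := (two_mul _).symm

end CrossNumber

-- Some infinite groups satisfy `hG`: for the Prüfer group `ℤ(p^∞)` the little cross number is `1`.
theorem K1_le_two_littleCross_general {G : Type*} [AddCommGroup G]
    (hG : BddAbove (zeroSumFreeCrossNums G)) : K1 G ≤ 2 * littleCross G := by
  refine Real.sSup_le ?_ (mul_nonneg zero_le_two littleCross_nonneg)
  rintro _ ⟨ℓ, g, hg, rfl⟩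
  exact hg.crossNum_le_two_littleCross hG

/-- Proposition (Girard): for any finite abelian group `G`, `K₁(G) ≤ 2·k(G)`. -/
theorem K1_le_two_littleCross {G : Type*} [AddCommGroup G] [Fintype G] :
    K1 G ≤ 2 * littleCross G :=
  K1_le_two_littleCross_general bddAbove_zeroSumFreeCrossNums
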